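/- arXiv:2304.04856 — 3 statements merged into one kernel-verified Lean document; each statement's English description precedes it below -/
import Mathlib

section
/- Let (Ω, Σ, ℙ) be a probability space, K ⊆ ℝ^m, f : K → ℝ^n, and X : Ω → K a random variable such that X and f∘X are both integrable. Then the pair of means (𝔼[X], 𝔼[f(X)]) lies in the convex hull CH(G(f)) of the graph of f. -/
open MeasureTheory

/-!
The pair `Z = (X, f ∘ X)` takes values in the convex hull `s` of the graph, so it suffices that a
convex set in finite dimension contains the mean `z` of every integrable random vector with values
in it, although it need not be closed. If `z ∉ s`, proper separation gives a functional `φ ≤ φ z` on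
`s` that is not identically `φ z` there. As `φ ∘ Z` has mean `φ z`, it equals `φ z` almost surely,
so `Z` takes values in the face `s ∩ {φ = φ z}`, whose affine span has smaller dimension than that
of `s`; induction on the dimension concludes.
-/

section Separation

theorem exists_forall_le_and_exists_lt_of_interior_nonempty {E : Type*} [TopologicalSpace E]
    [AddCommGroup E] [IsTopologicalAddGroup E] [Module ℝ E] [ContinuousSMul ℝ E] {s : Set E} {z : E}
    (hs : Convex ℝ s) (hne : (interior s).Nonempty) (hz : z ∉ interior s) :
    ∃ φ : StrongDual ℝ E, (∀ x ∈ s, φ x ≤ φ z) ∧ ∃ x ∈ s, φ x < φ z := by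
  obtain ⟨φ, hlt⟩ := geometric_hahn_banach_open_point hs.interior isOpen_interior hz
  have hclosure : closure (interior s) ⊆ {x | φ x ≤ φ z} :=
    closure_minimal (fun x hx => (hlt x hx).le) (isClosed_le φ.continuous continuous_const)
  rw [hs.closure_interior_eq_closure_of_nonempty_interior hne] at hclosure
  obtain ⟨x, hx⟩ := hne
  exact ⟨φ, fun y hy => hclosure (subset_closure hy), x, interior_subset hx, hlt x hx⟩

variable {E : Type*} [NormedAddCommGroup E] [NormedSpace ℝ E] [FiniteDimensional ℝ E]
  {s : Set E} {z : E}

theorem interior_preimage_direction_add_nonempty (hs : Convex ℝ s) (hz : z ∈ affineSpan ℝ s) :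
    (interior ((fun w : (affineSpan ℝ s).direction => (w : E) + z) ⁻¹' s)).Nonempty := by
  have hne : s.Nonempty := (affineSpan_nonempty ℝ).1 ⟨z, hz⟩
  obtain ⟨_, p, hp, rfl⟩ := hne.intrinsicInterior hs
  have : Nonempty (affineSpan ℝ s) := ⟨p⟩
  let e := (AffineIsometryEquiv.vaddConst ℝ (⟨z, hz⟩ : affineSpan ℝ s)).toHomeomorph
  change (interior (e ⁻¹' ((↑) ⁻¹' s))).Nonempty
  rw [← e.preimage_interior]
  exact Set.Nonempty.preimage ⟨p, hp⟩ e.surjective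

theorem exists_forall_le_and_exists_lt_of_mem_affineSpan (hs : Convex ℝ s) (hz : z ∈ affineSpan ℝ s)
    (hzs : z ∉ s) :
    ∃ φ : StrongDual ℝ E, (∀ x ∈ s, φ x ≤ φ z) ∧ ∃ x ∈ s, φ x < φ z := by
  set V := (affineSpan ℝ s).direction
  set t : Set V := (fun w : V => (w : E) + z) ⁻¹' s
  have ht : Convex ℝ t := (hs.translate_preimage_left z).linear_preimage V.subtype
  have h0 : (0 : V) ∉ interior t := fun h => hzs (by simpa [t] using interior_subset h)
  obtain ⟨ψ, hle, w, hw, hlt⟩ := exists_forall_le_and_exists_lt_of_interior_nonempty ht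
    (interior_preimage_direction_add_nonempty hs hz) h0
  obtain ⟨φ, hφ, -⟩ := exists_extension_norm_eq V ψ
  refine ⟨φ, fun x hx => ?_, w + z, hw, ?_⟩
  · have hxz : x - z ∈ V := AffineSubspace.vsub_mem_direction (subset_affineSpan ℝ s hx) hz
    have hψ : ψ ⟨x - z, hxz⟩ ≤ ψ 0 := hle _ (by simpa [t] using hx)
    rw [← hφ, map_sub, map_zero] at hψ
    exact sub_nonpos.1 hψ
  · rw [map_add, hφ]
    simpa using hlt

theorem exists_forall_le_and_exists_lt_of_notMem (hs : Convex ℝ s) (hne : s.Nonempty)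
    (hzs : z ∉ s) : ∃ φ : StrongDual ℝ E, (∀ x ∈ s, φ x ≤ φ z) ∧ ∃ x ∈ s, φ x < φ z := by
  by_cases hz : z ∈ affineSpan ℝ s
  · exact exists_forall_le_and_exists_lt_of_mem_affineSpan hs hz hzs
  · obtain ⟨φ, u, hlt, hu⟩ := geometric_hahn_banach_closed_point (affineSpan ℝ s).convex
      (affineSpan ℝ s).closed_of_finiteDimensional hz
    have hφ : ∀ x ∈ s, φ x < φ z := fun x hx => (hlt x (subset_affineSpan ℝ s hx)).trans hu
    obtain ⟨x, hx⟩ := hne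
    exact ⟨φ, fun y hy => (hφ y hy).le, x, hx, hφ x hx⟩

end Separation

theorem vectorSpan_inter_preimage_singleton_lt {R M N : Type*} [Ring R] [AddCommGroup M]
    [Module R M] [AddCommGroup N] [Module R N] (φ : M →ₗ[R] N) {s : Set M} {c : N}
    (heq : ∃ y ∈ s, φ y = c) (hne : ∃ x ∈ s, φ x ≠ c) :
    vectorSpan R (s ∩ φ ⁻¹' {c}) < vectorSpan R s := by
  obtain ⟨y, hy, hyc⟩ := heq
  obtain ⟨x, hx, hxc⟩ := hne
  have hker : vectorSpan R (s ∩ φ ⁻¹' {c}) ≤ φ.ker := by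
    rw [vectorSpan_def, Submodule.span_le]
    rintro _ ⟨a, ⟨-, ha : φ a = c⟩, b, ⟨-, hb : φ b = c⟩, rfl⟩
    simp [ha, hb]
  refine SetLike.lt_iff_le_and_exists.2 ⟨vectorSpan_mono R Set.inter_subset_left, x - y,
    vsub_mem_vectorSpan R hx hy, fun h => hxc ?_⟩
  rw [← hyc, ← sub_eq_zero, ← map_sub]
  exact hker h

section Mean

variable {Ω E : Type*} [MeasurableSpace Ω] {μ : Measure Ω} [IsProbabilityMeasure μ]
  [NormedAddCommGroup E] [NormedSpace ℝ E]

theorem ae_apply_eq_apply_integral_of_ae_le [CompleteSpace E] {Z : Ω → E} (hZ : Integrable Z μ)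
    (φ : StrongDual ℝ E) (hle : ∀ᵐ ω ∂μ, φ (Z ω) ≤ φ (∫ ω, Z ω ∂μ)) :
    ∀ᵐ ω ∂μ, φ (Z ω) = φ (∫ ω, Z ω ∂μ) := by
  refine (integral_eq_iff_of_ae_le (φ.integrable_comp hZ) (integrable_const _) hle).1 ?_
  rw [φ.integral_comp_comm hZ, integral_const, probReal_univ, one_smul]

theorem integral_mem_of_convex_of_finiteDimensional [FiniteDimensional ℝ E] {s : Set E}
    (hs : Convex ℝ s) {Z : Ω → E} (hZ : Integrable Z μ) (hZs : ∀ᵐ ω ∂μ, Z ω ∈ s) :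
    ∫ ω, Z ω ∂μ ∈ s := by
  induction hV : vectorSpan ℝ s using WellFoundedLT.induction generalizing s with
  | ind V ih =>
    subst hV
    by_contra hz
    set z := ∫ ω, Z ω ∂μ
    obtain ⟨φ, hle, x, hx, hlt⟩ :=
      exists_forall_le_and_exists_lt_of_notMem hs (hZs.exists.imp' Z fun _ h => h) hz
    have hZφ : ∀ᵐ ω ∂μ, φ (Z ω) = φ z :=
      ae_apply_eq_apply_integral_of_ae_le hZ φ (hZs.mono fun ω => hle (Z ω))
    have hface : ∀ᵐ ω ∂μ, Z ω ∈ s ∩ φ ⁻¹' {φ z} := hZs.and hZφ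
    have hspan : vectorSpan ℝ (s ∩ φ ⁻¹' {φ z}) < vectorSpan ℝ s :=
      vectorSpan_inter_preimage_singleton_lt φ.toLinearMap (hface.exists.imp' Z fun _ h => h)
        ⟨x, hx, hlt.ne⟩
    have hconvex : Convex ℝ (s ∩ φ ⁻¹' {φ z}) :=
      hs.inter ((convex_singleton _).linear_preimage φ.toLinearMap)
    exact hz (ih _ hspan hconvex hface rfl).1

theorem stmt_4_general [FiniteDimensional ℝ E] {F : Type*} [NormedAddCommGroup F] [NormedSpace ℝ F]
    [FiniteDimensional ℝ F] {K : Set E} {f : E → F} {X : Ω → E} (hXK : ∀ᵐ ω ∂μ, X ω ∈ K)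
    (hX : Integrable X μ) (hfX : Integrable (fun ω => f (X ω)) μ) :
    (∫ ω, X ω ∂μ, ∫ ω, f (X ω) ∂μ) ∈ convexHull ℝ ((fun x => (x, f x)) '' K) := by
  rw [← integral_pair hX hfX]
  exact integral_mem_of_convex_of_finiteDimensional (convex_convexHull ℝ _) (hX.prodMk hfX)
    (hXK.mono fun ω hω => subset_convexHull ℝ _ ⟨X ω, hω, rfl⟩)

end Mean

/-- finite-dimensional case: `(𝔼[X], 𝔼[f(X)])` lies in the convex hull of the
graph of `f`. -/
theorem stmt_4 {Ω : Type*} [MeasurableSpace Ω] (ℙ : Measure Ω) [IsProbabilityMeasure ℙ]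
    (m n : ℕ) (K : Set (Fin m → ℝ)) (f : (Fin m → ℝ) → (Fin n → ℝ))
    (X : Ω → Fin m → ℝ) (hXK : ∀ ω, X ω ∈ K)
    (hXint : Integrable X ℙ) (hfXint : Integrable (fun ω => f (X ω)) ℙ) :
    (∫ ω, X ω ∂ℙ, ∫ ω, f (X ω) ∂ℙ) ∈ convexHull ℝ ((fun x => (x, f x)) '' K) :=
  stmt_4_general (.of_forall hXK) hXint hfXint
end

section
/- Let (Ω, Σ, ℙ) be a probability space, K ⊆ ℝ^m a convex set, f : K → ℝ a strictly positive function, and X : Ω → K a random variable such that X and f∘X are integrable, and assume 𝔼[X] ∈ K. Let g_l, g_u : K → ℝ be real-valued functions such that CH(G(f))|_x ⊆ [g_l(x), g_u(x)] for all x ∈ K, and define ĉ_l = inf_{x ∈ K} g_l(x)/f(x) and ĉ_u = sup_{x ∈ K} g_u(x)/f(x), assumed finite. Then ĉ_l · f(𝔼[X]) ≤ 𝔼[f(X)] ≤ ĉ_u · f(𝔼[X]). -/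
open MeasureTheory

/-!
In finite dimension the mean of a random vector with values in a convex set `C` lies in `C`, closed
or not. If the mean `m` were outside `C`, a linear functional `l` would properly separate it from
`C`: `l ≤ l m` on `C`, with strict inequality somewhere. As `l m` is the mean of `l`, the random
vector almost surely stays in the slice `C ∩ {l = l m}`, whose affine span is strictly smaller, so
one can induct. For the convex hull of the graph of `f`, this puts `(𝔼[X], 𝔼[f(X)])` in the hull, so
that `𝔼[f(X)]` is trapped between `g_l` and `g_u` at `𝔼[X]`.
-/

section Separation

variable {E : Type*} [NormedAddCommGroup E] [NormedSpace ℝ E] [FiniteDimensional ℝ E]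
  {C : Set E} {x : E}

theorem exists_ne_zero_forall_mem_eq_of_affineSpan_ne_top (hC : affineSpan ℝ C ≠ ⊤)
    {p : E} (hp : p ∈ C) : ∃ l : StrongDual ℝ E, l ≠ 0 ∧ ∀ c ∈ C, l c = l p := by
  have hdirection : (affineSpan ℝ C).direction < ⊤ := lt_top_iff_ne_top.2 fun h =>
    hC ((AffineSubspace.direction_eq_top_iff_of_nonempty ⟨p, subset_affineSpan ℝ C hp⟩).1 h)
  obtain ⟨l, hl_ne, hl⟩ := Submodule.exists_le_ker_of_lt_top _ hdirection
  refine ⟨l.toContinuousLinearMap, by simpa using hl_ne, fun c hc => ?_⟩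
  have hker : c - p ∈ l.ker := hl (AffineSubspace.vsub_mem_direction
    (subset_affineSpan ℝ C hc) (subset_affineSpan ℝ C hp))
  exact LinearMap.sub_mem_ker_iff.1 hker

theorem exists_ne_zero_forall_mem_le_of_convex_of_notMem (hC : Convex ℝ C) (hne : C.Nonempty)
    (hx : x ∉ C) : ∃ l : StrongDual ℝ E, l ≠ 0 ∧ ∀ c ∈ C, l c ≤ l x := by
  by_cases hint : (interior C).Nonempty
  · exact geometric_hahn_banach_of_nonempty_interior_point hC
      (fun h => hx (interior_subset h)) hint
  · obtain ⟨p, hp⟩ := hne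
    rw [hC.interior_nonempty_iff_affineSpan_eq_top] at hint
    obtain ⟨l, hl_ne, hl⟩ := exists_ne_zero_forall_mem_eq_of_affineSpan_ne_top hint hp
    rcases le_total (l p) (l x) with h | h
    · exact ⟨l, hl_ne, fun c hc => (hl c hc).trans_le h⟩
    · exact ⟨-l, neg_ne_zero.2 hl_ne, fun c hc => neg_le_neg (h.trans_eq (hl c hc).symm)⟩

theorem exists_forall_mem_le_and_exists_mem_lt_of_convex_of_notMem (hC : Convex ℝ C)
    (hne : C.Nonempty) (hx : x ∉ C) :
    ∃ l : StrongDual ℝ E, (∀ c ∈ C, l c ≤ l x) ∧ ∃ c ∈ C, l c < l x := by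
  let D : Set E := (fun v => x + v) ⁻¹' C
  have hsub_mem {c : E} (hc : c ∈ C) : c - x ∈ D := by simpa [D] using hc
  -- Weak separation inside the span of `C - x` is proper, since a functional vanishing on `C - x`
  -- vanishes on that span.
  let V := Submodule.span ℝ D
  have hconvex : Convex ℝ (V.subtype ⁻¹' D) :=
    (hC.translate_preimage_right x).linear_preimage V.subtype
  have hnonempty : (V.subtype ⁻¹' D).Nonempty :=
    let ⟨c, hc⟩ := hne
    ⟨⟨c - x, Submodule.subset_span (hsub_mem hc)⟩, hsub_mem hc⟩
  obtain ⟨k, hk_ne, hk⟩ := exists_ne_zero_forall_mem_le_of_convex_of_notMem (x := 0)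
    hconvex hnonempty (by simpa [D] using hx)
  obtain ⟨l, hlk, -⟩ := exists_extension_norm_eq V k
  have hle : ∀ c ∈ C, l c ≤ l x := fun c hc => by
    have h := hk ⟨c - x, Submodule.subset_span (hsub_mem hc)⟩ (hsub_mem hc)
    rwa [← hlk, map_zero, map_sub, sub_nonpos] at h
  refine ⟨l, hle, ?_⟩
  by_contra! hge
  have hV : V ≤ l.ker := Submodule.span_le.2 fun v hv => by
    simpa using (hle (x + v) hv).antisymm (hge (x + v) hv)
  exact hk_ne (ContinuousLinearMap.ext fun v => (hlk v).symm.trans (hV v.2))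

end Separation

theorem vectorSpan_inter_setOf_eq_lt {R E F : Type*} [Ring R] [AddCommGroup E] [Module R E]
    [AddCommGroup F] [Module R F] {C : Set E} (l : E →ₗ[R] F) {p q : E}
    (hp : p ∈ C) (hq : q ∈ C) (hpq : l p ≠ l q) :
    vectorSpan R (C ∩ {c | l c = l q}) < vectorSpan R C := by
  refine lt_of_le_of_ne (vectorSpan_mono R Set.inter_subset_left) fun heq => hpq ?_
  have hker : vectorSpan R (C ∩ {c | l c = l q}) ≤ l.ker := Submodule.span_le.2 <| by
    rintro _ ⟨a, ⟨-, ha⟩, b, ⟨-, hb⟩, rfl⟩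
    exact LinearMap.sub_mem_ker_iff.2 (ha.trans hb.symm)
  exact LinearMap.sub_mem_ker_iff.1 (hker (heq ▸ vsub_mem_vectorSpan R hp hq))

section Mean

variable {Ω : Type*} [MeasurableSpace Ω] {μ : Measure Ω} [IsProbabilityMeasure μ]
  {E : Type*} [NormedAddCommGroup E] [NormedSpace ℝ E]

theorem ae_eq_integral_of_ae_le_integral {Y : Ω → ℝ} (hY : Integrable Y μ)
    (hle : ∀ᵐ ω ∂μ, Y ω ≤ ∫ ω', Y ω' ∂μ) : ∀ᵐ ω ∂μ, Y ω = ∫ ω', Y ω' ∂μ :=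
  (integral_eq_iff_of_ae_le hY (integrable_const _) hle).1 (by simp)

theorem integral_mem_of_convex [FiniteDimensional ℝ E] {C : Set E} (hC : Convex ℝ C)
    {Z : Ω → E} (hZ : Integrable Z μ) (hZC : ∀ᵐ ω ∂μ, Z ω ∈ C) : ∫ ω, Z ω ∂μ ∈ C := by
  induction hV : vectorSpan ℝ C using WellFoundedLT.induction generalizing C with
  | _ V ih =>
    subst hV
    by_contra hmean
    have hne : C.Nonempty := hZC.exists.imp' Z fun _ h => h
    obtain ⟨l, hle, p, hp, hlt⟩ :=
      exists_forall_mem_le_and_exists_mem_lt_of_convex_of_notMem hC hne hmean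
    have hslice : ∀ᵐ ω ∂μ, l (Z ω) = l (∫ ω, Z ω ∂μ) := by
      rw [← l.integral_comp_comm hZ] at hle ⊢
      exact ae_eq_integral_of_ae_le_integral (l.integrable_comp hZ) (hZC.mono fun ω => hle _)
    obtain ⟨ω₀, hω₀C, hω₀⟩ := (hZC.and hslice).exists
    refine hmean (ih _ ?_ (hC.inter (convex_hyperplane l.isLinear (l (Z ω₀)))) ?_ rfl).1
    · exact vectorSpan_inter_setOf_eq_lt (l : E →ₗ[ℝ] ℝ) hp hω₀C (hlt.trans_eq hω₀.symm).ne
    · filter_upwards [hZC, hslice] with ω hωC hω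
      exact ⟨hωC, hω.trans hω₀.symm⟩

theorem prodMk_integral_mem_convexHull_graphOn [FiniteDimensional ℝ E]
    {F : Type*} [NormedAddCommGroup F] [NormedSpace ℝ F] [FiniteDimensional ℝ F]
    {K : Set E} {f : E → F} {X : Ω → E} (hXK : ∀ᵐ ω ∂μ, X ω ∈ K)
    (hX : Integrable X μ) (hfX : Integrable (fun ω => f (X ω)) μ) :
    (∫ ω, X ω ∂μ, ∫ ω, f (X ω) ∂μ) ∈ convexHull ℝ (K.graphOn f) := by
  rw [← integral_pair hX hfX]
  exact integral_mem_of_convex (convex_convexHull ℝ _) (hX.prodMk hfX)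
    (hXK.mono fun ω hω => subset_convexHull ℝ _ (Set.mem_image_of_mem _ hω))

theorem stmt_10_general [FiniteDimensional ℝ E] {K : Set E} {f : E → ℝ}
    (hf : ∀ x ∈ K, 0 < f x) {X : Ω → E} (hXK : ∀ᵐ ω ∂μ, X ω ∈ K)
    (hX : Integrable X μ) (hfX : Integrable (fun ω => f (X ω)) μ)
    (hmean : ∫ ω, X ω ∂μ ∈ K) {gl gu : E → ℝ}
    (henv : ∀ x ∈ K, ∀ y : ℝ, (x, y) ∈ convexHull ℝ (K.graphOn f) → gl x ≤ y ∧ y ≤ gu x)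
    (hcl : BddBelow (Set.range fun x : K => gl x / f x))
    (hcu : BddAbove (Set.range fun x : K => gu x / f x)) :
    (⨅ x : K, gl x / f x) * f (∫ ω, X ω ∂μ) ≤ ∫ ω, f (X ω) ∂μ ∧
    (∫ ω, f (X ω) ∂μ) ≤ (⨆ x : K, gu x / f x) * f (∫ ω, X ω ∂μ) := by
  obtain ⟨hlower, hupper⟩ :=
    henv _ hmean _ (prodMk_integral_mem_convexHull_graphOn hXK hX hfX)
  have hpos := hf _ hmean
  exact ⟨((le_div_iff₀ hpos).1 (ciInf_le hcl ⟨_, hmean⟩)).trans hlower,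
    hupper.trans ((div_le_iff₀ hpos).1 (le_ciSup hcu ⟨_, hmean⟩))⟩

end Mean

/-- multiplicative bounds `ĉ_l · f(𝔼[X]) ≤ 𝔼[f(X)] ≤ ĉ_u · f(𝔼[X])` with
`ĉ_l = inf_{x ∈ K} g_l(x)/f(x)` and `ĉ_u = sup_{x ∈ K} g_u(x)/f(x)`. -/
theorem stmt_10 {Ω : Type*} [MeasurableSpace Ω] (ℙ : Measure Ω) [IsProbabilityMeasure ℙ]
    (m : ℕ) (K : Set (Fin m → ℝ)) (hK : Convex ℝ K) (f : (Fin m → ℝ) → ℝ)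
    (hfpos : ∀ x ∈ K, 0 < f x)
    (X : Ω → Fin m → ℝ) (hXK : ∀ ω, X ω ∈ K)
    (hXint : Integrable X ℙ) (hfXint : Integrable (fun ω => f (X ω)) ℙ)
    (hmean : (∫ ω, X ω ∂ℙ) ∈ K)
    (gl gu : (Fin m → ℝ) → ℝ)
    (henv : ∀ x ∈ K, ∀ y : ℝ,
      (x, y) ∈ convexHull ℝ ((fun x => (x, f x)) '' K) → gl x ≤ y ∧ y ≤ gu x)
    (hcl : BddBelow (Set.range fun x : K => gl x / f x))
    (hcu : BddAbove (Set.range fun x : K => gu x / f x)) :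
    (⨅ x : K, gl x / f x) * f (∫ ω, X ω ∂ℙ) ≤ ∫ ω, f (X ω) ∂ℙ ∧
    (∫ ω, f (X ω) ∂ℙ) ≤ (⨆ x : K, gu x / f x) * f (∫ ω, X ω ∂ℙ) :=
  stmt_10_general hfpos (.of_forall hXK) hXint hfXint hmean henv hcl hcu
end

section
/- (Graph convex hull bounds for conditional expectations.) Let (Ω, Σ, ℙ) be a probability space, 𝒳 a real Banach space, K ⊆ 𝒳, f : K → ℝ, X : Ω → K a random variable such that X and f∘X are Bochner integrable, and ℱ ⊆ Σ a sub-σ-algebra. Let g_l, g_u : closure(CH(K)) → [-∞, ∞] be such that for every x ∈ closure(CH(K)), the slice (closure CH(G(f)))|_x is contained in {y ∈ ℝ : g_l(x) ≤ y ≤ g_u(x)}. Then for ℙ-almost every ω ∈ Ω, 𝔼[X | ℱ](ω) ∈ closure(CH(K)) and g_l(𝔼[X | ℱ](ω)) ≤ 𝔼[f(X) | ℱ](ω) ≤ g_u(𝔼[X | ℱ](ω)). -/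
open MeasureTheory

/-!
The pair `(X, f(X))` takes values in the graph of `f`. Conditional expectation is computed
componentwise and never leaves a closed convex set, so `(𝔼[X | ℱ], 𝔼[f(X) | ℱ])` almost surely lies
in the closed convex hull of the graph.
-/

section CondExp

variable {Ω E F : Type*} {m m0 : MeasurableSpace Ω} {μ : Measure Ω}
  [NormedAddCommGroup E] [NormedSpace ℝ E] [CompleteSpace E]
  [NormedAddCommGroup F] [NormedSpace ℝ F] [CompleteSpace F]

lemma condExp_prodMk {X : Ω → E} {Y : Ω → F} (hX : Integrable X μ) (hY : Integrable Y μ) :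
    μ[fun ω => (X ω, Y ω)|m] =ᵐ[μ] fun ω => ((μ[X|m]) ω, (μ[Y|m]) ω) := by
  have hXY : Integrable (fun ω => (X ω, Y ω)) μ := hX.prodMk hY
  filter_upwards [(ContinuousLinearMap.fst ℝ E F).comp_condExp_comm (m := m) hXY,
    (ContinuousLinearMap.snd ℝ E F).comp_condExp_comm (m := m) hXY] with ω hfst hsnd
  exact Prod.ext hfst hsnd

lemma condExp_mem_closure_convexHull (hm : m ≤ m0) [SigmaFinite (μ.trim hm)] {K : Set E}
    {X : Ω → E} (hX : Integrable X μ) (hXK : ∀ᵐ ω ∂μ, X ω ∈ K) :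
    ∀ᵐ ω ∂μ, (μ[X|m]) ω ∈ closure (convexHull ℝ K) :=
  Convex.condExp_mem hm hX isClosed_closure (convex_convexHull ℝ K).closure
    (hXK.mono fun _ hω => subset_closure (subset_convexHull ℝ K hω))

lemma condExp_prodMk_mem_closure_convexHull_graphOn (hm : m ≤ m0) [SigmaFinite (μ.trim hm)]
    {K : Set E} {f : E → F} {X : Ω → E} (hX : Integrable X μ)
    (hfX : Integrable (fun ω => f (X ω)) μ) (hXK : ∀ᵐ ω ∂μ, X ω ∈ K) :
    ∀ᵐ ω ∂μ, ((μ[X|m]) ω, (μ[fun ω' => f (X ω')|m]) ω) ∈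
      closure (convexHull ℝ (K.graphOn f)) := by
  have hgraph : ∀ᵐ ω ∂μ, (X ω, f (X ω)) ∈ K.graphOn f :=
    hXK.mono fun _ hω => Set.mem_image_of_mem _ hω
  filter_upwards [condExp_mem_closure_convexHull hm (hX.prodMk hfX) hgraph,
    condExp_prodMk hX hfX] with ω hmem hpair
  rwa [← hpair]

theorem stmt_19_general (hm : m ≤ m0) [SigmaFinite (μ.trim hm)]
    {K : Set E} {f : E → ℝ} {X : Ω → E} (hX : Integrable X μ)
    (hfX : Integrable (fun ω => f (X ω)) μ) (hXK : ∀ᵐ ω ∂μ, X ω ∈ K) {gl gu : E → EReal}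
    (henv : ∀ x ∈ closure (convexHull ℝ K), ∀ y : ℝ,
      (x, y) ∈ closure (convexHull ℝ (K.graphOn f)) → gl x ≤ (y : EReal) ∧ (y : EReal) ≤ gu x) :
    ∀ᵐ ω ∂μ, (μ[X|m]) ω ∈ closure (convexHull ℝ K) ∧
      gl ((μ[X|m]) ω) ≤ (((μ[fun ω' => f (X ω')|m]) ω : ℝ) : EReal) ∧
      (((μ[fun ω' => f (X ω')|m]) ω : ℝ) : EReal) ≤ gu ((μ[X|m]) ω) := by
  filter_upwards [condExp_mem_closure_convexHull hm hX hXK,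
    condExp_prodMk_mem_closure_convexHull_graphOn hm hX hfX hXK] with ω hmem hgraph
  exact ⟨hmem, henv _ hmem _ hgraph⟩

end CondExp

/-- Graph convex hull bounds for conditional expectations. -/
theorem stmt_19 {Ω : Type*} {m0 : MeasurableSpace Ω} (ℙ : Measure Ω) [IsProbabilityMeasure ℙ]
    {𝒳 : Type*} [NormedAddCommGroup 𝒳] [NormedSpace ℝ 𝒳] [CompleteSpace 𝒳]
    (K : Set 𝒳) (f : 𝒳 → ℝ)
    (X : Ω → 𝒳) (hXK : ∀ ω, X ω ∈ K)
    (hXint : Integrable X ℙ) (hfXint : Integrable (fun ω => f (X ω)) ℙ)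
    (m : MeasurableSpace Ω) (hm : m ≤ m0)
    (gl gu : 𝒳 → EReal)
    (henv : ∀ x ∈ closure (convexHull ℝ K), ∀ y : ℝ,
      (x, y) ∈ closure (convexHull ℝ ((fun x => (x, f x)) '' K)) →
      gl x ≤ (y : EReal) ∧ (y : EReal) ≤ gu x) :
    ∀ᵐ ω ∂ℙ, (ℙ[X|m]) ω ∈ closure (convexHull ℝ K) ∧
      gl ((ℙ[X|m]) ω) ≤ (((ℙ[fun ω' => f (X ω')|m]) ω : ℝ) : EReal) ∧
      (((ℙ[fun ω' => f (X ω')|m]) ω : ℝ) : EReal) ≤ gu ((ℙ[X|m]) ω) := by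
  exact stmt_19_general hm hXint hfXint (ae_of_all ℙ hXK) henv
end
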